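/- For D = 24009857226825282345490, with N = 24548583881 the minimal absolute value of a negative norm in ℤ[√D], the smallest nonnegative integer a with a² ≡ D (mod N) is a = 4030160489, and the indecomposable element α_{7,6} satisfies N(α_{7,6}) = 977608342706 > (D − a²)/N = 977393040249; hence the Jang–Kim conjecture (that every totally positive indecomposable α ∈ ℤ[√D] satisfies N(α) ≤ (D−a²)/N) fails for this D. -/

import Mathlib

open Real

/-!
Expand `√D` with complete quotients `(m + √D) / d` and put `e = (D - m ^ 2) / d`. The norm form of
`ℤ[√D]`, written in the basis of two consecutive convergents, is up to sign
`d x ^ 2 - 2 m x y - e y ^ 2`, and one step of the continued fraction is the substitution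
`(x, y) ↦ (y, x - u y)` followed by a change of sign. An element with nonnegative coordinates can be
pushed along these substitutions until its coordinates would turn negative; there it lies in the
cone of two convergents `α i`, `α (i + 2)`, and by convexity its norm is at least as large, in
absolute value, as that of one of them. Hence the negative norms are bounded by the denominators
`d`, which are periodic, so `N` is found by running through one period.

For indecomposability, `β ↦ q β.re - p β.im` with `p + q √D` a convergent of negative norm takes
positive integer values on totally positive elements, so an element of value `1` is indecomposable.
-/

/-- The complete quotient `(m + √D) / d` in the continued fraction of `√D`, stored together with
`e = (D - m ^ 2) / d`, which is the preceding denominator; keeping `e` makes each step of the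
expansion polynomial in the data, except for one integer division. -/
@[ext]
structure CompleteQuotient where
  /-- The denominator. -/
  d : ℤ
  /-- The rational part of the numerator. -/
  m : ℤ
  /-- The denominator of the preceding complete quotient. -/
  e : ℤ

namespace CompleteQuotient

/-- The real number `(m + √D) / d` that a complete quotient stands for. -/
noncomputable def value (D : ℕ) (Q : CompleteQuotient) : ℝ := (Q.m + √D) / Q.d

/-- The partial quotient `⌊(m + √D) / d⌋`, computed in the integers. -/
def digit (D : ℕ) (Q : CompleteQuotient) : ℤ := (Q.m + D.sqrt) / Q.d

/-- The complete quotient following `Q`, with value `1 / (value - digit)`. -/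
def next (D : ℕ) (Q : CompleteQuotient) : CompleteQuotient where
  d := Q.e + 2 * Q.m * Q.digit D - Q.d * Q.digit D ^ 2
  m := Q.digit D * Q.d - Q.m
  e := Q.d

/-- The indefinite binary quadratic form with root `(m + √D) / d`. Up to sign it is the norm form
of `ℤ[√D]` in the basis of two consecutive convergents. -/
def form (Q : CompleteQuotient) (x y : ℤ) : ℤ := Q.d * x ^ 2 - 2 * Q.m * x * y - Q.e * y ^ 2

/-- The conditions satisfied by all complete quotients of `√D`, from the zeroth one on: the
discriminant is that of `D`, the value is greater than `1` and the conjugate value is negative. -/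
structure IsAdmissible (D : ℕ) (Q : CompleteQuotient) : Prop where
  discr : Q.m ^ 2 + Q.d * Q.e = D
  d_pos : 0 < Q.d
  m_le : Q.m ≤ D.sqrt
  d_le : Q.d ≤ Q.m + D.sqrt

/-- The `n`-th complete quotient of `√D`. -/
def ofSqrt (D n : ℕ) : CompleteQuotient := (next D)^[n] ⟨1, 0, D⟩

lemma ofSqrt_succ (D n : ℕ) : ofSqrt D (n + 1) = (ofSqrt D n).next D :=
  Function.iterate_succ_apply' _ _ _

lemma ofSqrt_add_mod {D a k : ℕ} (h : ofSqrt D (a + k) = ofSqrt D a) (n : ℕ) :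
    ofSqrt D (a + n % k) = ofSqrt D (a + n) := by
  have ofSqrt_add (n : ℕ) : ofSqrt D (a + n) = (next D)^[n] (ofSqrt D a) := by
    rw [add_comm, ofSqrt, Function.iterate_add_apply, ofSqrt]
  have isPeriodicPt : Function.IsPeriodicPt (next D) k (ofSqrt D a) := (ofSqrt_add k).symm.trans h
  rw [ofSqrt_add, ofSqrt_add, isPeriodicPt.iterate_mod_apply]

lemma form_digit_mul_add (D : ℕ) (Q : CompleteQuotient) (x y : ℤ) :
    Q.form (Q.digit D * x + y) x = -(Q.next D).form x y := by
  simp only [form, next]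
  ring

lemma next_discr (D : ℕ) (Q : CompleteQuotient) :
    (Q.next D).m ^ 2 + (Q.next D).d * (Q.next D).e = Q.m ^ 2 + Q.d * Q.e := by
  simp only [next]
  ring

lemma sq_sqrt_lt {D : ℕ} (hD : ¬IsSquare D) : (D.sqrt : ℤ) ^ 2 < D := by
  have hne : D.sqrt ^ 2 ≠ D := fun h => hD ⟨D.sqrt, by rw [← sq, h]⟩
  exact_mod_cast lt_of_le_of_ne (Nat.sqrt_le' D) hne

lemma lt_succ_sqrt_sq (D : ℕ) : (D : ℤ) < (D.sqrt + 1) ^ 2 := mod_cast Nat.lt_succ_sqrt' D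

namespace IsAdmissible

variable {D : ℕ} {Q : CompleteQuotient}

lemma digit_mul_le (hQ : Q.IsAdmissible D) : Q.digit D * Q.d ≤ Q.m + D.sqrt :=
  Int.ediv_mul_le _ hQ.d_pos.ne'

lemma lt_digit_add_one_mul (hQ : Q.IsAdmissible D) : Q.m + D.sqrt < (Q.digit D + 1) * Q.d :=
  Int.lt_ediv_add_one_mul_self _ hQ.d_pos

lemma digit_pos (hQ : Q.IsAdmissible D) : 0 < Q.digit D :=
  (Int.le_ediv_iff_mul_le hQ.d_pos).2 (by linarith [hQ.d_le])

lemma e_pos (hD : ¬IsSquare D) (hQ : Q.IsAdmissible D) : 0 < Q.e := by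
  have m_sq_lt : Q.m ^ 2 < D :=
    (sq_le_sq' (by linarith [hQ.d_pos, hQ.d_le]) hQ.m_le).trans_lt (sq_sqrt_lt hD)
  exact pos_of_mul_pos_right (by linarith [hQ.discr]) hQ.d_pos.le

lemma next (hD : ¬IsSquare D) (hQ : Q.IsAdmissible D) : (Q.next D).IsAdmissible D := by
  have discr : (Q.next D).m ^ 2 + (Q.next D).d * Q.d = D := (next_discr D Q).trans hQ.discr
  have m_eq : (Q.next D).m = Q.digit D * Q.d - Q.m := rfl
  have m_le : (Q.next D).m ≤ D.sqrt := by linarith [hQ.digit_mul_le]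
  have lt_m_add_d : D.sqrt < (Q.next D).m + Q.d := by linarith [hQ.lt_digit_add_one_mul]
  have neg_lt_m : -(D.sqrt : ℤ) < (Q.next D).m := by
    nlinarith [hQ.digit_pos, hQ.d_pos, hQ.m_le]
  have d_pos : 0 < (Q.next D).d := by
    have m_sq_lt : (Q.next D).m ^ 2 < D := (sq_le_sq' neg_lt_m.le m_le).trans_lt (sq_sqrt_lt hD)
    exact pos_of_mul_pos_left (by linarith) hQ.d_pos.le
  refine ⟨discr, d_pos, m_le, Int.lt_add_one_iff.1 (lt_of_mul_lt_mul_right ?_ hQ.d_pos.le)⟩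
  calc (Q.next D).d * Q.d
      < (D.sqrt + 1 - (Q.next D).m) * (D.sqrt + 1 + (Q.next D).m) := by
        linarith [lt_succ_sqrt_sq D]
    _ ≤ Q.d * (D.sqrt + 1 + (Q.next D).m) := by gcongr <;> linarith
    _ = ((Q.next D).m + D.sqrt + 1) * Q.d := by ring

lemma floor_value (hQ : Q.IsAdmissible D) : ⌊Q.value D⌋ = Q.digit D := by
  rw [value, Int.floor_div_cast_of_nonneg hQ.d_pos.le, Int.floor_intCast_add,
    Real.floor_real_sqrt_eq_nat_sqrt, digit]

lemma value_next (hD : ¬IsSquare D) (hQ : Q.IsAdmissible D) :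
    (Q.next D).value D = 1 / (Q.value D - Q.digit D) := by
  have d_pos : (0 : ℝ) < Q.d := mod_cast hQ.d_pos
  have next_d_pos : (0 : ℝ) < (Q.next D).d := mod_cast (hQ.next hD).d_pos
  have m_lt : ((Q.next D).m : ℝ) < √D := by
    refine ((Int.cast_le.2 (hQ.next hD).m_le).trans_lt ?_)
    exact Real.lt_sqrt_of_sq_lt (mod_cast sq_sqrt_lt hD)
  have discr : ((Q.next D).m : ℝ) ^ 2 + (Q.next D).d * Q.d = √D ^ 2 := by
    rw [Real.sq_sqrt D.cast_nonneg]
    exact_mod_cast (hQ.next hD).discr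
  have value_sub_digit : Q.value D - Q.digit D = (√D - (Q.next D).m) / Q.d := by
    simp only [value, CompleteQuotient.next]
    push_cast
    field_simp
    ring
  rw [value_sub_digit, one_div_div, value, div_eq_div_iff next_d_pos.ne' (sub_pos.2 m_lt).ne']
  linear_combination -discr

-- `-form` takes the values `next.d` at `(u, 1)` and `e` at `(0, 1)`, and its polar form pairs these
-- two vectors to at least `next.d + e`; expand at `u • (x, y) = x • (u, 1) + z • (0, 1)`.
lemma min_le_neg_form (hD : ¬IsSquare D) (hQ : Q.IsAdmissible D) {x y : ℤ} (hx : 0 ≤ x)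
    (hy : 0 < y) (hxy : x ≤ Q.digit D * y) : min (Q.next D).d Q.e ≤ -Q.form x y := by
  set u := Q.digit D
  set d' := (Q.next D).d
  set z := u * y - x
  have u_pos : 0 < u := hQ.digit_pos
  have min_pos : 0 < min d' Q.e := lt_min (hQ.next hD).d_pos (hQ.e_pos hD)
  have d_pos : 0 < Q.d := hQ.d_pos
  have z_nonneg : 0 ≤ z := sub_nonneg.2 hxy
  have expansion : u ^ 2 * -Q.form x y =
      d' * x ^ 2 + Q.e * z ^ 2 + (d' + Q.e) * (x * z) + Q.d * u ^ 2 * (x * z) := by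
    simp only [form, z, show d' = Q.e + 2 * Q.m * u - Q.d * u ^ 2 from rfl]
    ring
  refine le_of_mul_le_mul_left ?_ (pow_pos u_pos 2)
  calc u ^ 2 * min d' Q.e
      ≤ u ^ 2 * min d' Q.e * y ^ 2 := le_mul_of_one_le_right (by positivity) (by nlinarith)
    _ = min d' Q.e * x ^ 2 + min d' Q.e * z ^ 2 + (min d' Q.e + min d' Q.e) * (x * z) := by
      simp only [z]
      ring
    _ ≤ d' * x ^ 2 + Q.e * z ^ 2 + (d' + Q.e) * (x * z) := by
      gcongr <;> first | exact min_le_left _ _ | exact min_le_right _ _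
    _ ≤ u ^ 2 * -Q.form x y := by
      rw [expansion]
      exact le_add_of_nonneg_right (mul_nonneg (by positivity) (mul_nonneg hx z_nonneg))

lemma exists_iterate_e_le (hD : ¬IsSquare D) {Q : CompleteQuotient} (hQ : Q.IsAdmissible D)
    {x y : ℤ} (hx : 0 ≤ x) (hy : 0 ≤ y) :
    (Q.form x y < 0 → ∃ j, ((CompleteQuotient.next D)^[2 * j] Q).e ≤ -Q.form x y) ∧
    (0 < Q.form x y → ∃ j, ((CompleteQuotient.next D)^[2 * j + 1] Q).e ≤ Q.form x y) := by
  rcases hy.eq_or_lt with rfl | hy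
  · have form_eq : Q.form x 0 = Q.d * x ^ 2 := by simp [form]
    have d_pos := hQ.d_pos
    rw [form_eq]
    refine ⟨fun h => absurd h (not_lt.2 (by positivity)), fun h => ⟨0, ?_⟩⟩
    exact le_mul_of_one_le_right d_pos.le (pos_of_mul_pos_right h d_pos.le)
  rcases le_total x (Q.digit D * y) with hxy | hxy
  · have min_le := hQ.min_le_neg_form hD hx hy hxy
    have min_pos := lt_min (hQ.next hD).d_pos (hQ.e_pos hD)
    refine ⟨fun _ => ?_, fun h => by linarith⟩
    rcases min_le_iff.1 min_le with d_le | e_le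
    · exact ⟨1, d_le⟩
    · exact ⟨0, e_le⟩
  · obtain ⟨z, rfl⟩ : ∃ z, x = Q.digit D * y + z := ⟨x - Q.digit D * y, by ring⟩
    have z_nonneg : 0 ≤ z := nonneg_of_le_add_right hxy
    obtain ⟨of_neg, of_pos⟩ := exists_iterate_e_le hD (hQ.next hD) hy.le z_nonneg
    rw [form_digit_mul_add, neg_neg]
    refine ⟨fun h => ?_, fun h => of_neg (neg_pos.1 h)⟩
    obtain ⟨j, hj⟩ := of_pos (neg_lt_zero.1 h)
    exact ⟨j + 1, hj⟩
termination_by (x + y).toNat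
decreasing_by
  have y_le : y ≤ Q.digit D * y := le_mul_of_one_le_left hy.le hQ.digit_pos
  exact (Int.toNat_lt_toNat (by linarith)).2 (by linarith)

end IsAdmissible

lemma isAdmissible_ofSqrt {D : ℕ} (hD : ¬IsSquare D) (n : ℕ) : (ofSqrt D n).IsAdmissible D := by
  have sqrt_pos : 0 < D.sqrt := Nat.sqrt_pos.2 (Nat.pos_of_ne_zero fun h => hD (by simp [h]))
  have h₀ : IsAdmissible D ⟨1, 0, D⟩ :=
    { discr := by simp
      d_pos := one_pos
      m_le := Int.natCast_nonneg _
      d_le := by simpa [Nat.one_le_iff_ne_zero] using sqrt_pos.ne' }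
  exact Function.Iterate.rec (IsAdmissible D) h₀ (fun _ => IsAdmissible.next hD) n

lemma value_ofSqrt {D : ℕ} (hD : ¬IsSquare D) {u : ℤ → ℤ} {c : ℤ → ℝ} (hc0 : c 0 = √D)
    (hu : ∀ i : ℤ, 0 ≤ i → u i = ⌊c i⌋)
    (hcrec : ∀ i : ℤ, 0 ≤ i → c (i + 1) = 1 / (c i - u i)) (n : ℕ) :
    (ofSqrt D n).value D = c n := by
  induction n with
  | zero => simp [ofSqrt, value, hc0]
  | succ n ih =>
    have hQ := isAdmissible_ofSqrt hD n
    rw [ofSqrt_succ, hQ.value_next hD, Nat.cast_succ, hcrec n n.cast_nonneg, hu n n.cast_nonneg,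
      ← ih, hQ.floor_value]

lemma digit_ofSqrt {D : ℕ} (hD : ¬IsSquare D) {u : ℤ → ℤ} {c : ℤ → ℝ} (hc0 : c 0 = √D)
    (hu : ∀ i : ℤ, 0 ≤ i → u i = ⌊c i⌋)
    (hcrec : ∀ i : ℤ, 0 ≤ i → c (i + 1) = 1 / (c i - u i)) (n : ℕ) :
    (ofSqrt D n).digit D = u n := by
  rw [← (isAdmissible_ofSqrt hD n).floor_value, value_ofSqrt hD hc0 hu hcrec, hu n n.cast_nonneg]

end CompleteQuotient

open CompleteQuotient

section Convergents

/-- The convergents `p + q √D` of `√D` as elements of `ℤ[√D]`, shifted by two: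
`sqrtConvergent D n` is `α_{n-2}`, and the recursion starts from `α_{-2} = √D` and `α_{-1} = 1`. -/
def sqrtConvergent (D : ℕ) : ℕ → ℤ√(D : ℤ)
  | 0 => Zsqrtd.sqrtd
  | 1 => 1
  | n + 2 => (ofSqrt D n).digit D * sqrtConvergent D (n + 1) + sqrtConvergent D n

variable {D : ℕ}

lemma norm_mk (a b : ℤ) : (⟨a, b⟩ : ℤ√(D : ℤ)).norm = a ^ 2 - D * b ^ 2 := by
  rw [Zsqrtd.norm_def]
  ring

lemma norm_mul_sqrtConvergent_add (n : ℕ) (x y : ℤ) :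
    (x * sqrtConvergent D (n + 1) + y * sqrtConvergent D n).norm =
      (-1) ^ n * (ofSqrt D n).form x y := by
  induction n generalizing x y with
  | zero =>
    have eq_mk : x * sqrtConvergent D 1 + y * sqrtConvergent D 0 = ⟨x, y⟩ := by
      simp only [sqrtConvergent, mul_one, Zsqrtd.decompose, mul_comm]
    rw [eq_mk, norm_mk, ofSqrt, Function.iterate_zero_apply, form]
    ring
  | succ n ih =>
    have change_basis : (x * sqrtConvergent D (n + 2) + y * sqrtConvergent D (n + 1) : ℤ√(D : ℤ)) =
        ((ofSqrt D n).digit D * x + y : ℤ) * sqrtConvergent D (n + 1) + x * sqrtConvergent D n := by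
      rw [sqrtConvergent]
      push_cast
      ring
    rw [change_basis, ih, form_digit_mul_add, ofSqrt_succ]
    ring

lemma norm_sqrtConvergent (n : ℕ) :
    (sqrtConvergent D (n + 1)).norm = (-1) ^ n * (ofSqrt D n).d := by
  simpa [form] using norm_mul_sqrtConvergent_add (D := D) n 1 0

lemma norm_semiconvergent (n : ℕ) (r : ℤ) :
    (r * sqrtConvergent D (n + 1) + sqrtConvergent D n).norm =
      (-1) ^ n * (ofSqrt D n).form r 1 := by
  simpa using norm_mul_sqrtConvergent_add (D := D) n r 1

lemma sqrtConvergent_det (n : ℕ) :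
    (sqrtConvergent D (n + 1)).re * (sqrtConvergent D n).im -
      (sqrtConvergent D n).re * (sqrtConvergent D (n + 1)).im = (-1) ^ n := by
  induction n with
  | zero => simp [sqrtConvergent]
  | succ n ih =>
    simp only [sqrtConvergent, Zsqrtd.re_add, Zsqrtd.im_add, Zsqrtd.re_smul, Zsqrtd.im_smul]
    linear_combination -ih

lemma sqrtConvergent_nonneg (hD : ¬IsSquare D) (n : ℕ) :
    0 ≤ (sqrtConvergent D n).re ∧ 0 ≤ (sqrtConvergent D n).im := by
  induction n using Nat.twoStepInduction with
  | zero => simp [sqrtConvergent]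
  | one => simp [sqrtConvergent]
  | more n ih ih' =>
    have digit_pos := (isAdmissible_ofSqrt hD n).digit_pos
    simp only [sqrtConvergent, Zsqrtd.re_add, Zsqrtd.im_add, Zsqrtd.re_smul, Zsqrtd.im_smul]
    obtain ⟨re_nonneg, im_nonneg⟩ := ih
    obtain ⟨re_nonneg', im_nonneg'⟩ := ih'
    constructor <;> positivity

lemma exists_e_le_neg_norm (hD : ¬IsSquare D) {β : ℤ√(D : ℤ)} (hβ : β.norm < 0) :
    ∃ j, (ofSqrt D (2 * j)).e ≤ -β.norm := by
  have norm_eq : β.norm = (ofSqrt D 0).form |β.re| |β.im| := by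
    simp only [ofSqrt, form, Zsqrtd.norm_def, Function.iterate_zero_apply, sq_abs]
    ring
  rw [norm_eq] at hβ ⊢
  exact ((isAdmissible_ofSqrt hD 0).exists_iterate_e_le hD (abs_nonneg _) (abs_nonneg _)).1 hβ

lemma isLeast_neg_norm (hD : ¬IsSquare D) {M k : ℕ} (hk : Odd k) (hM : (ofSqrt D k).d = M)
    (hle : ∀ j, (M : ℤ) ≤ (ofSqrt D (2 * j)).e) :
    IsLeast {n : ℕ | 0 < n ∧ ∃ a b : ℤ, a ^ 2 - (D : ℤ) * b ^ 2 = -(n : ℤ)} M := by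
  constructor
  · have M_pos : (0 : ℤ) < M := hM ▸ (isAdmissible_ofSqrt hD k).d_pos
    refine ⟨mod_cast M_pos, (sqrtConvergent D (k + 1)).re, (sqrtConvergent D (k + 1)).im, ?_⟩
    rw [← norm_mk, norm_sqrtConvergent, hk.neg_one_pow, hM, neg_one_mul]
  · rintro n ⟨n_pos, a, b, hab⟩
    rw [← norm_mk] at hab
    obtain ⟨j, hj⟩ := exists_e_le_neg_norm hD (hab ▸ neg_neg_of_pos (Int.natCast_pos.2 n_pos))
    rw [hab, neg_neg] at hj
    exact_mod_cast (hle j).trans hj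

lemma mk_eq_sqrtConvergent {u p q : ℤ → ℤ} (hu : ∀ n : ℕ, (ofSqrt D n).digit D = u n)
    (hpm : p (-1) = 1) (hqm : q (-1) = 0) (hp0 : p 0 = u 0) (hq0 : q 0 = 1)
    (hprec : ∀ i : ℤ, 0 ≤ i → p (i + 1) = u (i + 1) * p i + p (i - 1))
    (hqrec : ∀ i : ℤ, 0 ≤ i → q (i + 1) = u (i + 1) * q i + q (i - 1)) (n : ℕ) :
    (⟨p n, q n⟩ : ℤ√(D : ℤ)) = sqrtConvergent D (n + 2) := by
  suffices (⟨p (n - 1), q (n - 1)⟩ : ℤ√(D : ℤ)) = sqrtConvergent D (n + 1) ∧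
      (⟨p n, q n⟩ : ℤ√(D : ℤ)) = sqrtConvergent D (n + 2) from this.2
  induction n with
  | zero =>
    have u_zero : (ofSqrt D 0).digit D = u 0 := hu 0
    constructor <;> ext <;> simp [sqrtConvergent, hpm, hqm, hp0, hq0, u_zero]
  | succ n ih =>
    obtain ⟨ih_pred, ih⟩ := ih
    have u_succ : (ofSqrt D (n + 1)).digit D = u (n + 1) := mod_cast hu (n + 1)
    push_cast
    rw [add_sub_cancel_right, hprec n n.cast_nonneg, hqrec n n.cast_nonneg]
    refine ⟨ih, ?_⟩
    rw [sqrtConvergent, ← ih, ← ih_pred, u_succ, Zsqrtd.smul_val, Zsqrtd.add_def]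

end Convergents

section Indecomposable

variable {D : ℕ} {β γ : ℤ√(D : ℤ)}

/-- Positivity under both real embeddings of `ℤ[√D]`. -/
def IsTotallyPositive (β : ℤ√(D : ℤ)) : Prop :=
  0 < (β.re : ℝ) + β.im * √D ∧ 0 < (β.re : ℝ) - β.im * √D

/-- Totally positive elements of `ℤ[√D]` that are not the sum of two totally positive elements. -/
def IsIndecomposable (β : ℤ√(D : ℤ)) : Prop :=
  IsTotallyPositive β ∧
    ¬∃ γ δ : ℤ√(D : ℤ), IsTotallyPositive γ ∧ IsTotallyPositive δ ∧ β = γ + δ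

lemma cast_norm (β : ℤ√(D : ℤ)) : (β.norm : ℝ) = (β.re : ℝ) ^ 2 - (β.im * √D) ^ 2 := by
  rw [mul_pow, Real.sq_sqrt D.cast_nonneg, Zsqrtd.norm_def]
  push_cast
  ring

lemma isTotallyPositive_of_norm_pos (hre : 0 ≤ β.re) (hβ : 0 < β.norm) : IsTotallyPositive β := by
  have sq_lt : (β.im * √D) ^ 2 < (β.re : ℝ) ^ 2 :=
    sub_pos.1 ((cast_norm β).symm ▸ Int.cast_pos.2 hβ)
  obtain ⟨neg_lt, lt⟩ := abs_lt.1 (abs_lt_of_sq_lt_sq sq_lt (Int.cast_nonneg hre))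
  exact ⟨by linarith, by linarith⟩

-- `2 √D` times the determinant is `γ * star β - star γ * β`, a sum of two positive terms.
lemma IsTotallyPositive.det_pos (hβ : IsTotallyPositive β) (him : 0 ≤ γ.im) (hγ : γ.norm < 0) :
    0 < γ.im * β.re - γ.re * β.im := by
  have sq_lt : (γ.re : ℝ) ^ 2 < (γ.im * √D) ^ 2 :=
    sub_neg.1 ((cast_norm γ).symm ▸ Int.cast_lt_zero.2 hγ)
  obtain ⟨neg_lt, lt⟩ := abs_lt.1 <| abs_lt_of_sq_lt_sq sq_lt <|
    mul_nonneg (Int.cast_nonneg him) (Real.sqrt_nonneg _)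
  have γ_pos : 0 < (γ.re : ℝ) + γ.im * √D := by linarith
  have neg_conj_γ_pos : 0 < γ.im * √D - γ.re := by linarith
  have two_sqrt_mul_det_pos : 0 < 2 * √D * (γ.im * β.re - γ.re * β.im) :=
    calc 0 < (γ.re + γ.im * √D) * (β.re - β.im * √D) +
          (γ.im * √D - γ.re) * (β.re + β.im * √D) :=
        add_pos (mul_pos γ_pos hβ.2) (mul_pos neg_conj_γ_pos hβ.1)
      _ = 2 * √D * (γ.im * β.re - γ.re * β.im) := by ring
  exact_mod_cast pos_of_mul_pos_right two_sqrt_mul_det_pos (by positivity)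

lemma IsTotallyPositive.isIndecomposable_of_det_eq_one (hβ : IsTotallyPositive β)
    (him : 0 ≤ γ.im) (hγ : γ.norm < 0) (hdet : γ.im * β.re - γ.re * β.im = 1) :
    IsIndecomposable β := by
  refine ⟨hβ, ?_⟩
  rintro ⟨β₁, β₂, h₁, h₂, rfl⟩
  have det_pos₁ := h₁.det_pos him hγ
  have det_pos₂ := h₂.det_pos him hγ
  simp only [Zsqrtd.re_add, Zsqrtd.im_add] at hdet
  linarith

lemma isIndecomposable_semiconvergent (hD : ¬IsSquare D) {n : ℕ} (hn : Odd n) {r : ℤ}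
    (hr : 0 ≤ r) (hrn : r ≤ (ofSqrt D n).digit D) :
    IsIndecomposable (D := D) (r * sqrtConvergent D (n + 1) + sqrtConvergent D n) := by
  have hQ := isAdmissible_ofSqrt hD n
  obtain ⟨re_nonneg, -⟩ := sqrtConvergent_nonneg hD n
  obtain ⟨re_nonneg', im_nonneg'⟩ := sqrtConvergent_nonneg hD (n + 1)
  have norm_pos : 0 < (r * sqrtConvergent D (n + 1) + sqrtConvergent D n).norm := by
    have min_le := hQ.min_le_neg_form hD hr one_pos (by rwa [mul_one])
    rw [norm_semiconvergent, hn.neg_one_pow]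
    linarith [lt_min (hQ.next hD).d_pos (hQ.e_pos hD)]
  have norm_neg : (sqrtConvergent D (n + 1)).norm < 0 := by
    rw [norm_sqrtConvergent, hn.neg_one_pow]
    linarith [hQ.d_pos]
  refine (isTotallyPositive_of_norm_pos ?_ norm_pos).isIndecomposable_of_det_eq_one
    im_nonneg' norm_neg ?_
  · simp only [Zsqrtd.re_add, Zsqrtd.re_smul]
    positivity
  · have det := sqrtConvergent_det (D := D) n
    rw [hn.neg_one_pow] at det
    simp only [Zsqrtd.re_add, Zsqrtd.im_add, Zsqrtd.re_smul, Zsqrtd.im_smul]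
    linear_combination -det

end Indecomposable

lemma isLeast_sq_modEq {p a : ℕ} {D : ℤ} (hp : p.Prime) (ha : 2 * a ≤ p)
    (hD : (a : ℤ) ^ 2 ≡ D [ZMOD p]) : IsLeast {b : ℕ | (b : ℤ) ^ 2 ≡ D [ZMOD p]} a := by
  refine ⟨hD, fun b hb => not_lt.1 fun hba => ?_⟩
  have dvd_mul : (p : ℤ) ∣ (a + b) * (a - b) := by
    rw [← sq_sub_sq]
    exact (Int.ModEq.trans hb hD.symm).dvd
  rcases (Nat.prime_iff_prime_int.1 hp).dvd_or_dvd dvd_mul with h | h <;>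
    linarith [Int.le_of_dvd (by lia) h]

lemma prime_24548583881 : Nat.Prime 24548583881 := by
  have primeFactorsList_eq :
      (24548583881 - 1).primeFactorsList = [2, 2, 2, 5, 37, 1033, 16057] := by
    simp [Nat.primeFactorsList_ofNat]
  refine lucas_primality _ 6 (by norm_num only; reduce_mod_char) fun q hq hdvd => ?_
  have hmem := (Nat.mem_primeFactorsList (by norm_num)).2 ⟨hq, hdvd⟩
  simp only [primeFactorsList_eq, List.mem_cons, List.not_mem_nil, or_false, or_self_left] at hmem
  rcases hmem with rfl | rfl | rfl | rfl | rfl <;> norm_num only <;> reduce_mod_char <;> decide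

lemma le_e_ofSqrt_two_mul (j : ℕ) :
    24548583881 ≤ (ofSqrt 24009857226825282345490 (2 * j)).e := by
  have periodic : ofSqrt 24009857226825282345490 (1 + 18) = ofSqrt 24009857226825282345490 1 := by
    ext <;> decide +kernel
  have le_in_period : ∀ r < 18, Odd r →
      24548583881 ≤ (ofSqrt 24009857226825282345490 (1 + r)).e := by
    decide +kernel
  cases j with
  | zero => decide +kernel
  | succ j =>
    rw [show 2 * (j + 1) = 1 + (2 * j + 1) by ring, ← ofSqrt_add_mod periodic]
    exact le_in_period _ (Nat.mod_lt _ (by norm_num)) (Nat.odd_iff.2 (by lia))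

theorem stmt19 (D : ℕ) (hDsf : Squarefree D) (hD4 : D % 4 = 2 ∨ D % 4 = 3)
    (u : ℤ → ℤ) (c : ℤ → ℝ)
    (hc0 : c 0 = Real.sqrt D)
    (hu : ∀ i : ℤ, 0 ≤ i → u i = ⌊c i⌋)
    (hcrec : ∀ i : ℤ, 0 ≤ i → c (i + 1) = 1 / (c i - u i))
    (p q : ℤ → ℤ)
    (hpm : p (-1) = 1) (hqm : q (-1) = 0)
    (hp0 : p 0 = u 0) (hq0 : q 0 = 1)
    (hprec : ∀ i : ℤ, 0 ≤ i → p (i + 1) = u (i + 1) * p i + p (i - 1))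
    (hqrec : ∀ i : ℤ, 0 ≤ i → q (i + 1) = u (i + 1) * q i + q (i - 1))
    (hD : D = 24009857226825282345490)
    (N : ℕ)
    (hN : IsLeast {n : ℕ | 0 < n ∧ ∃ a b : ℤ, a ^ 2 - (D : ℤ) * b ^ 2 = -(n : ℤ)} N) :
    N = 24548583881 ∧
    IsLeast {a : ℕ | (a : ℤ) ^ 2 ≡ (D : ℤ) [ZMOD (N : ℤ)]} 4030160489 ∧
    (p 7 + 6 * p 8) ^ 2 - (D : ℤ) * (q 7 + 6 * q 8) ^ 2 = 977608342706 ∧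
    (N : ℤ) * 977393040249 = (D : ℤ) - 4030160489 ^ 2 ∧
    ∃ x y : ℤ,
      (0 < (x : ℝ) + y * Real.sqrt D ∧ 0 < (x : ℝ) - y * Real.sqrt D) ∧
      (¬ ∃ a b a' b' : ℤ,
        (0 < (a : ℝ) + b * Real.sqrt D ∧ 0 < (a : ℝ) - b * Real.sqrt D) ∧
        (0 < (a' : ℝ) + b' * Real.sqrt D ∧ 0 < (a' : ℝ) - b' * Real.sqrt D) ∧
        x = a + a' ∧ y = b + b') ∧
      ((x : ℝ) ^ 2 - (D : ℝ) * (y : ℝ) ^ 2 > ((D : ℝ) - 4030160489 ^ 2) / (N : ℝ)) := by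
  have not_isSquare : ¬IsSquare D := by norm_num [hD]
  have α_eq :=
    mk_eq_sqrtConvergent (digit_ofSqrt not_isSquare hc0 hu hcrec) hpm hqm hp0 hq0 hprec hqrec
  have α_semi_eq : (⟨p 7 + 6 * p 8, q 7 + 6 * q 8⟩ : ℤ√(D : ℤ)) =
      (6 : ℤ) * sqrtConvergent D 10 + sqrtConvergent D 9 := by
    rw [← α_eq 7, ← α_eq 8]
    ext <;> simp [add_comm]
  have norm_eq : (p 7 + 6 * p 8) ^ 2 - (D : ℤ) * (q 7 + 6 * q 8) ^ 2 = 977608342706 := by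
    rw [← norm_mk, α_semi_eq, norm_semiconvergent, hD]
    decide +kernel
  have indecomposable : IsIndecomposable (D := D) ⟨p 7 + 6 * p 8, q 7 + 6 * q 8⟩ := by
    rw [α_semi_eq]
    exact isIndecomposable_semiconvergent not_isSquare (by decide) (by decide)
      (by rw [hD]; decide +kernel)
  subst hD
  obtain rfl : N = 24548583881 := hN.unique <|
    isLeast_neg_norm not_isSquare (k := 3) (by decide) (by decide +kernel) le_e_ofSqrt_two_mul
  refine ⟨rfl, isLeast_sq_modEq prime_24548583881 (by norm_num) (by decide), norm_eq, by norm_num,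
    p 7 + 6 * p 8, q 7 + 6 * q 8, indecomposable.1, ?_, ?_⟩
  · rintro ⟨a, b, a', b', h, h', ha, hb⟩
    exact indecomposable.2 ⟨⟨a, b⟩, ⟨a', b'⟩, h, h', Zsqrtd.ext ha hb⟩
  · have norm_eq_real := congrArg (Int.cast : ℤ → ℝ) norm_eq
    push_cast at norm_eq_real ⊢
    rw [norm_eq_real]
    norm_num
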